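/- The sequence of normalized Lobachevsky splines f_n*(x) = a√(n/3) · f_n(a√(n/3) · x) converges pointwise (indeed uniformly on ℝ) as n → ∞ to the standard normal density (1/√(2π)) exp(−x²/2). -/

import Mathlib

open MeasureTheory Filter

noncomputable def lob (a : ℝ) : ℕ → ℝ → ℝ
  | 0 => fun _ => 0
  | 1 => fun x => if |x| ≤ a then 1 / (2 * a) else 0
  | (n + 2) => fun x => (1 / (2 * a)) * ∫ t in (x - a)..(x + a), lob a (n + 1) t

/-- Normalized Lobachevsky spline `f_n*(x) = a√(n/3) f_n(a√(n/3) x)`. -/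
noncomputable def lobStar (a : ℝ) (n : ℕ) (x : ℝ) : ℝ :=
  a * Real.sqrt (n / 3) * lob a n (a * Real.sqrt (n / 3) * x)

/-- Standard normal density. -/
noncomputable def stdNormal (x : ℝ) : ℝ :=
  (1 / Real.sqrt (2 * Real.pi)) * Real.exp (-x ^ 2 / 2)

/-!
By Fourier inversion, the uniform distance between two functions is at most the `L¹` distance
between their Fourier transforms. The transform of `f_n*` is `φ (w / √n) ^ n` with
`φ w = sinc (2π√3 w)`. Since `sinc y = 1 - y² / 6 + o(y²)`, it converges pointwise to
`exp (-2π²w²)`, the transform of the normal density. Since `sinc² (2x) ≤ (1 + x²)⁻¹`, Bernoulli's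
inequality with exponent `n / 2 ≥ 1` bounds it by the integrable function `(1 + 3π²w² / 2)⁻¹`,
uniformly in `n ≥ 2`, so dominated convergence gives `L¹` convergence of the transforms.
-/

open scoped FourierTransform Convolution Topology

section FourierTransform

variable {V E : Type*} [NormedAddCommGroup V] [InnerProductSpace ℝ V] [FiniteDimensional ℝ V]
  [MeasurableSpace V] [BorelSpace V] [NormedAddCommGroup E] [NormedSpace ℂ E]

theorem norm_sub_le_integral_norm_fourier_sub [CompleteSpace E] {f g : V → E}
    (hf : Continuous f) (hg : Continuous g) (hf_int : Integrable f) (hg_int : Integrable g)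
    (hf_fourier : Integrable (𝓕 f)) (hg_fourier : Integrable (𝓕 g)) (x : V) :
    ‖f x - g x‖ ≤ ∫ w, ‖𝓕 f w - 𝓕 g w‖ := by
  have integrable_fourierInv {h : V → E} (hh : Integrable h) :
      Integrable fun w ↦ Real.fourierChar (inner ℝ w x) • h w := by
    simpa using (Real.fourierIntegral_convergent_iff (-x)).mpr hh
  calc ‖f x - g x‖ = ‖𝓕⁻ (𝓕 f) x - 𝓕⁻ (𝓕 g) x‖ := by
        rw [hf.fourierInv_fourier_eq hf_int hf_fourier, hg.fourierInv_fourier_eq hg_int hg_fourier]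
    _ = ‖∫ w, Real.fourierChar (inner ℝ w x) • (𝓕 f w - 𝓕 g w)‖ := by
        rw [Real.fourierInv_eq, Real.fourierInv_eq, ← integral_sub
          (integrable_fourierInv hf_fourier) (integrable_fourierInv hg_fourier)]
        simp_rw [smul_sub]
    _ ≤ ∫ w, ‖𝓕 f w - 𝓕 g w‖ := by
        simpa using norm_integral_le_integral_norm
          fun w ↦ Real.fourierChar (inner ℝ w x) • (𝓕 f w - 𝓕 g w)

theorem continuous_fourier {f : V → E} (hf : Integrable f) : Continuous (𝓕 f) :=
  VectorFourier.fourierIntegral_continuous Real.continuous_fourierChar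
    continuous_inner hf

theorem tendstoUniformly_of_dominated_fourier [CompleteSpace E] {ι : Type*} {l : Filter ι}
    [l.IsCountablyGenerated] {F : ι → V → E} {f : V → E} {bound : V → ℝ}
    (hF : ∀ᶠ i in l, Continuous (F i)) (hf : Continuous f)
    (hF_int : ∀ᶠ i in l, Integrable (F i)) (hf_int : Integrable f)
    (hf_fourier : Integrable (𝓕 f)) (bound_int : Integrable bound)
    (h_bound : ∀ᶠ i in l, ∀ᵐ w, ‖𝓕 (F i) w‖ ≤ bound w)
    (h_lim : ∀ᵐ w, Tendsto (fun i ↦ 𝓕 (F i) w) l (𝓝 (𝓕 f w))) :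
    TendstoUniformly F f l := by
  have h_L1 : Tendsto (fun i ↦ ∫ w, ‖𝓕 (F i) w - 𝓕 f w‖) l (𝓝 0) := by
    rw [← integral_zero V ℝ]
    refine tendsto_integral_filter_of_dominated_convergence (fun w ↦ bound w + ‖𝓕 f w‖)
      ?_ ?_ (bound_int.add hf_fourier.norm)
      (h_lim.mono fun w hw ↦ tendsto_iff_norm_sub_tendsto_zero.mp hw)
    · filter_upwards [hF_int] with i hi
      exact ((continuous_fourier hi).sub (continuous_fourier hf_int)).norm.aestronglyMeasurable
    · filter_upwards [h_bound] with i hi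
      filter_upwards [hi] with w hw
      rw [norm_norm]
      exact (norm_sub_le _ _).trans (by gcongr)
  rw [Metric.tendstoUniformly_iff]
  intro ε hε
  filter_upwards [hF, hF_int, h_bound, h_L1.eventually_lt_const hε]
    with i hi hi_int hi_bound hi_lt x
  have hi_fourier : Integrable (𝓕 (F i)) :=
    bound_int.mono' (continuous_fourier hi_int).aestronglyMeasurable hi_bound
  rw [dist_comm, dist_eq_norm]
  exact (norm_sub_le_integral_norm_fourier_sub hi hf hi_int hf_int hi_fourier hf_fourier x).trans_lt
    hi_lt

theorem fourier_smul_comp_mul_left (f : ℝ → E) {s : ℝ} (hs : 0 < s) (w : ℝ) :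
    𝓕 (fun x ↦ s • f (s * x)) w = 𝓕 f (w / s) := by
  have h_subst := Measure.integral_comp_mul_left
    (fun v ↦ Real.fourierChar (-(v * (w / s))) • f v) s
  have h_arg (x : ℝ) : s * x * (w / s) = x * w := by field_simp
  simp_rw [h_arg] at h_subst
  simp_rw [Real.fourier_real_eq, smul_comm _ s]
  rw [integral_smul, h_subst, abs_of_pos (inv_pos.mpr hs), smul_inv_smul₀ hs.ne']

end FourierTransform

section MovingAverage

variable {𝕜 E : Type*} [RCLike 𝕜] [NormedAddCommGroup E] [NormedSpace ℝ E]

theorem indicator_Icc_const_convolution [NormedSpace 𝕜 E] {a : ℝ} (ha : 0 ≤ a) (c : 𝕜)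
    (f : ℝ → E) (x : ℝ) :
    ((Set.Icc (-a) a).indicator (fun _ ↦ c) ⋆[ContinuousLinearMap.lsmul 𝕜 𝕜] f) x =
      c • ∫ t in (x - a)..(x + a), f t := by
  have integrand_eq (t : ℝ) : (Set.Icc (-a) a).indicator (fun _ ↦ c) (x - t) • f t =
      (Set.Icc (x - a) (x + a)).indicator (fun t ↦ c • f t) t := by
    have h_mem : x - t ∈ Set.Icc (-a) a ↔ t ∈ Set.Icc (x - a) (x + a) := by
      simp only [Set.mem_Icc]
      constructor <;> rintro ⟨_, _⟩ <;> constructor <;> linarith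
    simp only [Set.indicator, h_mem, ite_smul, zero_smul]
  rw [convolution_eq_swap]
  simp_rw [ContinuousLinearMap.lsmul_apply, integrand_eq]
  rw [integral_indicator measurableSet_Icc, integral_Icc_eq_integral_Ioc,
    ← intervalIntegral.integral_of_le (by linarith), intervalIntegral.integral_smul]

theorem continuous_integral_sub_add {f : ℝ → E}
    (hf : ∀ u v, IntervalIntegrable f volume u v) (a : ℝ) :
    Continuous fun x ↦ ∫ t in (x - a)..(x + a), f t := by
  have h_primitive := intervalIntegral.continuous_primitive hf 0
  have h_sub : (fun x ↦ ∫ t in (x - a)..(x + a), f t) =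
      fun x ↦ (∫ t in 0..(x + a), f t) - ∫ t in 0..(x - a), f t :=
    funext fun x ↦ (intervalIntegral.integral_interval_sub_left (hf _ _) (hf _ _)).symm
  rw [h_sub]
  exact (h_primitive.comp (continuous_add_const a)).sub (h_primitive.comp (continuous_sub_right a))

theorem integral_exp_mul_I_eq_two_mul_sinc (a r : ℝ) :
    ∫ t in -a..a, Complex.exp (↑(r * t) * Complex.I) = 2 * a * Real.sinc (r * a) := by
  rcases eq_or_ne r 0 with rfl | hr
  · simp [← two_mul]
  · rw [intervalIntegral.integral_comp_mul_left (fun t : ℝ ↦ Complex.exp (t * Complex.I)) hr,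
      mul_neg, integral_exp_mul_I_eq_sinc, Complex.real_smul]
    have : (r : ℂ) ≠ 0 := by exact_mod_cast hr
    push_cast
    field_simp

theorem fourier_indicator_Icc_const {a : ℝ} (ha : 0 ≤ a) (c : ℂ) (w : ℝ) :
    𝓕 ((Set.Icc (-a) a).indicator fun _ ↦ c) w =
      2 * a * c * Real.sinc (2 * Real.pi * a * w) := by
  rw [Real.fourier_real_eq_integral_exp_smul]
  have integrand_eq (v : ℝ) : Complex.exp (↑(-2 * Real.pi * v * w) * Complex.I) •
      (Set.Icc (-a) a).indicator (fun _ ↦ c) v =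
      (Set.Icc (-a) a).indicator
        (fun v ↦ Complex.exp (↑(-2 * Real.pi * w * v) * Complex.I) * c) v := by
    simp only [Set.indicator, smul_eq_mul, mul_ite, mul_zero, mul_right_comm _ v w]
  simp_rw [integrand_eq]
  rw [integral_indicator measurableSet_Icc, integral_Icc_eq_integral_Ioc,
    ← intervalIntegral.integral_of_le (by linarith), intervalIntegral.integral_mul_const,
    integral_exp_mul_I_eq_two_mul_sinc, ← Real.sinc_neg, mul_right_comm (2 * (a : ℂ))]
  congr 3
  ring

end MovingAverage

section Sinc

theorem sinc_two_mul (x : ℝ) : Real.sinc (2 * x) = Real.sinc x * Real.cos x := by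
  rcases eq_or_ne x 0 with rfl | hx
  · simp
  · rw [Real.sinc_of_ne_zero (by positivity), Real.sinc_of_ne_zero hx, Real.sin_two_mul]
    field_simp

theorem sinc_two_mul_sq_le (x : ℝ) : Real.sinc (2 * x) ^ 2 ≤ (1 + x ^ 2)⁻¹ := by
  rcases le_total |x| (Real.pi / 2) with hx | hx
  · obtain ⟨hx_ge, hx_le⟩ := abs_le.mp hx
    have cos_nonneg : 0 ≤ Real.cos x := Real.cos_nonneg_of_mem_Icc ⟨by linarith, hx_le⟩
    have cos_le : Real.cos x ≤ 1 / √(x ^ 2 + 1) :=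
      Real.cos_le_one_div_sqrt_sq_add_one (by linarith) (by linarith)
    calc Real.sinc (2 * x) ^ 2 = Real.sinc x ^ 2 * Real.cos x ^ 2 := by
          rw [sinc_two_mul, mul_pow]
      _ ≤ 1 * (1 / √(x ^ 2 + 1)) ^ 2 := by
          gcongr
          exact (sq_le_one_iff_abs_le_one _).mpr (Real.abs_sinc_le_one x)
      _ = (1 + x ^ 2)⁻¹ := by
          rw [one_mul, div_pow, Real.sq_sqrt (by positivity), one_pow, one_div, add_comm]
  · have one_le_abs : 1 ≤ |x| := by linarith [Real.pi_gt_three]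
    have hx0 : x ≠ 0 := abs_pos.mp (by linarith)
    have one_le_sq : 1 ≤ x ^ 2 := (one_le_sq_iff_one_le_abs x).mpr one_le_abs
    calc Real.sinc (2 * x) ^ 2 = Real.sin (2 * x) ^ 2 / (2 * x) ^ 2 := by
          rw [Real.sinc_of_ne_zero (by positivity), div_pow]
      _ ≤ 1 / (2 * x) ^ 2 := by gcongr; exact Real.sin_sq_le_one _
      _ ≤ (1 + x ^ 2)⁻¹ := by
          rw [one_div]
          gcongr
          linarith

theorem sinc_mul_sq_le (b w : ℝ) : Real.sinc (b * w) ^ 2 ≤ (1 + b ^ 2 / 4 * w ^ 2)⁻¹ := by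
  convert sinc_two_mul_sq_le (b / 2 * w) using 3 <;> ring

theorem abs_sinc_sub_le {y : ℝ} (hy : |y| ≤ 1) :
    |Real.sinc y - (1 - y ^ 2 / 6)| ≤ y ^ 4 / 100 := by
  rcases eq_or_ne y 0 with rfl | hy0
  · simp
  have h_sin : |y| * |Real.sinc y - (1 - y ^ 2 / 6)| = |Real.sin y - (y - y ^ 3 / 6)| := by
    rw [← abs_mul, Real.sinc_of_ne_zero hy0]
    congr 1
    field_simp
  refine le_of_mul_le_mul_left ?_ (abs_pos.mpr hy0)
  calc |y| * |Real.sinc y - (1 - y ^ 2 / 6)| ≤ |y| ^ 5 / 100 := h_sin ▸ Real.sin_bound hy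
    _ = |y| * (y ^ 4 / 100) := by rw [← Even.pow_abs (by decide : Even 4) y]; ring

theorem isLittleO_sinc_sub :
    (fun y : ℝ ↦ Real.sinc y - (1 - y ^ 2 / 6)) =o[𝓝 0] fun y ↦ y ^ 2 := by
  have h_bigO : (fun y : ℝ ↦ Real.sinc y - (1 - y ^ 2 / 6)) =O[𝓝 0] fun y ↦ y ^ 4 := by
    refine .of_bound (1 / 100) ?_
    filter_upwards [Metric.closedBall_mem_nhds (0 : ℝ) one_pos] with y hy
    rw [Real.norm_eq_abs, Real.norm_of_nonneg (by positivity), one_div_mul_eq_div]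
    exact abs_sinc_sub_le (by simpa using hy)
  exact h_bigO.trans_isLittleO (Asymptotics.isLittleO_pow_pow (by norm_num))

theorem isLittleO_sinc_mul_sub (b : ℝ) :
    (fun w : ℝ ↦ Real.sinc (b * w) - (1 - b ^ 2 / 6 * w ^ 2)) =o[𝓝 0] fun w ↦ w ^ 2 := by
  have h_arg : Tendsto (fun w ↦ b * w) (𝓝 0) (𝓝 0) := by
    simpa using (continuous_const_mul b).tendsto 0
  refine ((isLittleO_sinc_sub.comp_tendsto h_arg).congr (fun w ↦ ?_)
    fun w ↦ mul_pow b w 2).of_const_mul_right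
  simp only [Function.comp_apply]
  ring

end Sinc

section LocalLimit

theorem tendsto_pow_div_sqrt_of_isLittleO {φ : ℝ → ℂ} {k : ℂ}
    (hφ : (fun w : ℝ ↦ φ w - (1 - k * w ^ 2)) =o[𝓝 0] fun w ↦ w ^ 2) (w : ℝ) :
    Tendsto (fun n : ℕ ↦ φ (w / √n) ^ n) atTop (𝓝 (Complex.exp (-(k * w ^ 2)))) := by
  have h_arg : Tendsto (fun n : ℕ ↦ w / √n) atTop (𝓝 0) :=
    tendsto_const_nhds.div_atTop (Real.tendsto_sqrt_atTop.comp tendsto_natCast_atTop_atTop)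
  have sq_div_sqrt (n : ℕ) : (w / √n) ^ 2 = w ^ 2 / n := by
    rw [div_pow, Real.sq_sqrt n.cast_nonneg]
  have h_comp : (fun n : ℕ ↦ φ (w / √n) - (1 + -(k * w ^ 2) / n)) =o[atTop]
      fun n : ℕ ↦ w ^ 2 * (1 / (n : ℝ)) := by
    refine (hφ.comp_tendsto h_arg).congr (fun n ↦ ?_) fun n ↦ ?_
    · simp only [Function.comp_apply, ← Complex.ofReal_pow, sq_div_sqrt]
      push_cast
      ring
    · simp only [Function.comp_apply, sq_div_sqrt, mul_one_div]
  refine Complex.tendsto_pow_exp_of_isLittleO_sub_add_div _ (h_comp.of_const_mul_right.trans_le ?_)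
  simp

theorem pow_le_inv_one_add_mul_of_sq_le {r u : ℝ} (hr : 0 ≤ r) (hu : 0 ≤ u)
    (h : r ^ 2 ≤ (1 + u)⁻¹) {n : ℕ} (hn : 2 ≤ n) : r ^ n ≤ (1 + n / 2 * u)⁻¹ := by
  have one_le_half : (1 : ℝ) ≤ n / 2 := by
    rw [le_div_iff₀ two_pos, one_mul]
    exact_mod_cast hn
  calc r ^ n = (r ^ 2) ^ ((n : ℝ) / 2) := by
        rw [← Real.rpow_natCast, ← Real.rpow_natCast, ← Real.rpow_mul hr]
        congr 1
        push_cast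
        ring
    _ ≤ ((1 + u)⁻¹) ^ ((n : ℝ) / 2) := by gcongr
    _ = ((1 + u) ^ ((n : ℝ) / 2))⁻¹ := Real.inv_rpow (by positivity) _
    _ ≤ (1 + n / 2 * u)⁻¹ := by
        gcongr
        exact one_add_mul_self_le_rpow_one_add (by linarith) one_le_half

theorem norm_pow_div_sqrt_le {φ : ℝ → ℂ} {c : ℝ} (hc : 0 ≤ c)
    (hφ : ∀ w, ‖φ w‖ ^ 2 ≤ (1 + c * w ^ 2)⁻¹) {n : ℕ} (hn : 2 ≤ n) (w : ℝ) :
    ‖φ (w / √n) ^ n‖ ≤ (1 + c / 2 * w ^ 2)⁻¹ := by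
  have hn0 : (n : ℝ) ≠ 0 := by positivity
  calc ‖φ (w / √n) ^ n‖ = ‖φ (w / √n)‖ ^ n := norm_pow _ _
    _ ≤ (1 + n / 2 * (c * (w / √n) ^ 2))⁻¹ :=
        pow_le_inv_one_add_mul_of_sq_le (norm_nonneg _) (by positivity) (hφ _) hn
    _ = (1 + c / 2 * w ^ 2)⁻¹ := by
        rw [div_pow, Real.sq_sqrt n.cast_nonneg]
        field_simp

theorem integrable_inv_one_add_mul_sq {c : ℝ} (hc : 0 < c) :
    Integrable fun x : ℝ ↦ (1 + c * x ^ 2)⁻¹ := by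
  simpa only [mul_pow, Real.sq_sqrt hc.le] using
    integrable_inv_one_add_sq.comp_mul_left' (Real.sqrt_pos.mpr hc).ne'

theorem continuous_stdNormal : Continuous stdNormal := by
  unfold stdNormal
  fun_prop

theorem integrable_stdNormal : Integrable stdNormal := by
  unfold stdNormal
  refine Integrable.const_mul ?_ _
  convert integrable_exp_neg_mul_sq (b := 1 / 2) (by norm_num) using 3 with x
  ring

theorem fourier_stdNormal (w : ℝ) :
    𝓕 (fun x ↦ (stdNormal x : ℂ)) w = Complex.exp (-(2 * Real.pi ^ 2 * w ^ 2)) := by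
  have scale_pos : 0 < 1 / √(2 * Real.pi) := by positivity
  have h_scale : (fun x ↦ (stdNormal x : ℂ)) = fun x ↦ (1 / √(2 * Real.pi)) •
      Complex.exp (-Real.pi * 1 * ↑(1 / √(2 * Real.pi) * x) ^ 2) := by
    ext x
    rw [stdNormal, Complex.ofReal_mul, Complex.real_smul, ← Complex.ofReal_pow, mul_pow, div_pow,
      Real.sq_sqrt (by positivity), Complex.ofReal_exp]
    congr 2
    push_cast
    field_simp
  have h_sq : (w / (1 / √(2 * Real.pi))) ^ 2 = 2 * Real.pi * w ^ 2 := by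
    rw [div_div_eq_mul_div, div_one, mul_pow, Real.sq_sqrt (by positivity), mul_comm]
  rw [h_scale, fourier_smul_comp_mul_left (fun x ↦ Complex.exp (-Real.pi * 1 * x ^ 2)) scale_pos,
    fourier_gaussian_pi (by simp)]
  simp only [Complex.one_cpow, div_one, one_mul, ← Complex.ofReal_pow, h_sq]
  congr 1
  push_cast
  ring

theorem integrable_fourier_stdNormal : Integrable (𝓕 fun x ↦ (stdNormal x : ℂ)) := by
  have h_real := integrable_exp_neg_mul_sq (b := 2 * Real.pi ^ 2) (by positivity)
  rw [funext fourier_stdNormal]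
  convert h_real.ofReal (𝕜 := ℂ) using 2 with w
  simp

theorem tendstoUniformly_stdNormal_of_fourier_eq_pow {f : ℕ → ℝ → ℝ} {φ : ℝ → ℂ} {c : ℝ}
    (hc : 0 < c) (hφ : (fun w : ℝ ↦ φ w - (1 - 2 * Real.pi ^ 2 * w ^ 2)) =o[𝓝 0] fun w ↦ w ^ 2)
    (hφ_le : ∀ w, ‖φ w‖ ^ 2 ≤ (1 + c * w ^ 2)⁻¹)
    (hf : ∀ᶠ n in atTop, Continuous (f n)) (hf_int : ∀ᶠ n in atTop, Integrable (f n))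
    (hf_fourier : ∀ᶠ n : ℕ in atTop, ∀ w, 𝓕 (fun x ↦ (f n x : ℂ)) w = φ (w / √n) ^ n) :
    TendstoUniformly f stdNormal atTop := by
  suffices h_complex : TendstoUniformly (fun n x ↦ (f n x : ℂ)) (fun x ↦ (stdNormal x : ℂ)) atTop
    from Complex.reCLM.uniformContinuous.comp_tendstoUniformly h_complex
  refine tendstoUniformly_of_dominated_fourier
    (hf.mono fun n hn ↦ Complex.continuous_ofReal.comp hn)
    (Complex.continuous_ofReal.comp continuous_stdNormal)
    (hf_int.mono fun n hn ↦ hn.ofReal) integrable_stdNormal.ofReal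
    integrable_fourier_stdNormal (integrable_inv_one_add_mul_sq (half_pos hc)) ?_
    (.of_forall fun w ↦ ?_)
  · filter_upwards [hf_fourier, eventually_ge_atTop 2] with n hn hn2
    refine .of_forall fun w ↦ ?_
    rw [hn]
    exact norm_pow_div_sqrt_le hc.le hφ_le hn2 w
  · rw [fourier_stdNormal]
    refine (tendsto_pow_div_sqrt_of_isLittleO hφ w).congr' ?_
    filter_upwards [hf_fourier] with n hn
    exact (hn w).symm

end LocalLimit

section Lobachevsky

variable {a : ℝ}

theorem lob_one_ofReal (a : ℝ) :
    (fun x ↦ (lob a 1 x : ℂ)) = (Set.Icc (-a) a).indicator fun _ ↦ (1 / (2 * a) : ℂ) := by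
  ext x
  simp [lob, Set.indicator, abs_le, apply_ite Complex.ofReal]

theorem lob_add_two_ofReal (ha : 0 ≤ a) (n : ℕ) :
    (fun x ↦ (lob a (n + 2) x : ℂ)) = (fun x ↦ (lob a 1 x : ℂ))
      ⋆[ContinuousLinearMap.lsmul ℂ ℂ] fun x ↦ (lob a (n + 1) x : ℂ) := by
  ext x
  rw [lob_one_ofReal, indicator_Icc_const_convolution ha, intervalIntegral.integral_ofReal]
  simp [lob]

theorem integrable_lob (ha : 0 ≤ a) : ∀ n, Integrable (lob a n)
  | 0 => integrable_zero _ _ _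
  | 1 => by
    have h_complex : Integrable fun x ↦ (lob a 1 x : ℂ) := by
      rw [lob_one_ofReal, integrable_indicator_iff measurableSet_Icc]
      exact integrableOn_const (by simp)
    exact h_complex.re
  | n + 2 => by
    have h_complex : Integrable fun x ↦ (lob a (n + 2) x : ℂ) := by
      rw [lob_add_two_ofReal ha]
      exact (integrable_lob ha 1).ofReal.integrable_convolution _ (integrable_lob ha (n + 1)).ofReal
    exact h_complex.re

theorem continuous_lob (ha : 0 ≤ a) {n : ℕ} (hn : 2 ≤ n) : Continuous (lob a n) := by
  obtain ⟨m, rfl⟩ := Nat.exists_eq_add_of_le' hn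
  exact (continuous_integral_sub_add
    (fun _ _ ↦ (integrable_lob ha (m + 1)).intervalIntegrable) a).const_mul _

theorem fourier_lob (ha : 0 < a) {n : ℕ} (hn : n ≠ 0) (w : ℝ) :
    𝓕 (fun x ↦ (lob a n x : ℂ)) w = (Real.sinc (2 * Real.pi * a * w) : ℂ) ^ n := by
  have h_int (n : ℕ) : Integrable fun x ↦ (lob a n x : ℂ) := (integrable_lob ha.le n).ofReal
  have fourier_one : 𝓕 (fun x ↦ (lob a 1 x : ℂ)) w = Real.sinc (2 * Real.pi * a * w) := by
    have : (a : ℂ) ≠ 0 := by exact_mod_cast ha.ne'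
    rw [lob_one_ofReal, fourier_indicator_Icc_const ha.le]
    field_simp
  induction n, Nat.one_le_iff_ne_zero.mpr hn using Nat.le_induction with
  | base => rw [fourier_one, pow_one]
  | succ m hm ih =>
    obtain ⟨k, rfl⟩ := Nat.exists_eq_add_of_le' hm
    rw [lob_add_two_ofReal ha.le, Real.fourier_smul_convolution_eq (h_int 1) (h_int (k + 1)),
      fourier_one, ih k.succ_ne_zero, smul_eq_mul, ← pow_succ']

theorem continuous_lobStar (ha : 0 ≤ a) {n : ℕ} (hn : 2 ≤ n) : Continuous (lobStar a n) :=
  ((continuous_lob ha hn).comp (continuous_const_mul _)).const_mul _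

theorem integrable_lobStar (ha : 0 < a) {n : ℕ} (hn : n ≠ 0) : Integrable (lobStar a n) :=
  have scale_ne : a * √(n / 3) ≠ 0 := by positivity
  ((integrable_lob ha.le n).comp_mul_left' scale_ne).const_mul _

theorem fourier_lobStar (ha : 0 < a) {n : ℕ} (hn : n ≠ 0) (w : ℝ) :
    𝓕 (fun x ↦ (lobStar a n x : ℂ)) w =
      (Real.sinc (2 * Real.pi * √3 * (w / √n)) : ℂ) ^ n := by
  have scale_pos : 0 < a * √(n / 3) := by positivity
  have h_smul : (fun x ↦ (lobStar a n x : ℂ)) =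
      fun x ↦ (a * √(n / 3)) • (lob a n (a * √(n / 3) * x) : ℂ) := by
    ext x
    rw [lobStar, Complex.ofReal_mul, Complex.real_smul]
  rw [h_smul, fourier_smul_comp_mul_left (fun x ↦ (lob a n x : ℂ)) scale_pos, fourier_lob ha hn,
    Real.sqrt_div n.cast_nonneg]
  congr 3
  field_simp

end Lobachevsky

theorem lobStar_tendstoUniformly_stdNormal (a : ℝ) (ha : 0 < a) :
    TendstoUniformly (fun n x => lobStar a n x) stdNormal atTop := by
  let b : ℝ := 2 * Real.pi * √3
  let φ (w : ℝ) : ℂ := Real.sinc (b * w)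
  have b_sq : b ^ 2 = 12 * Real.pi ^ 2 := by
    rw [mul_pow, Real.sq_sqrt (by norm_num)]
    ring
  have φ_expansion : (fun w : ℝ ↦ φ w - (1 - 2 * Real.pi ^ 2 * w ^ 2)) =o[𝓝 0] fun w ↦ w ^ 2 := by
    convert Complex.isLittleO_ofReal_left.mpr (isLittleO_sinc_mul_sub b) using 2 with w
    rw [b_sq]
    push_cast
    ring
  have φ_decay (w : ℝ) : ‖φ w‖ ^ 2 ≤ (1 + b ^ 2 / 4 * w ^ 2)⁻¹ := by
    rw [Complex.norm_real, Real.norm_eq_abs, sq_abs]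
    exact sinc_mul_sq_le b w
  refine tendstoUniformly_stdNormal_of_fourier_eq_pow (by positivity) φ_expansion φ_decay ?_ ?_ ?_
  · filter_upwards [eventually_ge_atTop 2] with n hn using continuous_lobStar ha.le hn
  · filter_upwards [eventually_ne_atTop 0] with n hn using integrable_lobStar ha hn
  · filter_upwards [eventually_ne_atTop 0] with n hn using fourier_lobStar ha hn
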